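/- Fix a positive integer n and a linear order on Fin n. Every row of the forest compatibility matrix F_n is a ℚ-linear combination of the rows indexed by partitions of Fin n that are non-crossing with respect to that order; that is, the rows corresponding to non-crossing partitions span the row space of F_n. -/

import Mathlib

noncomputable section

/-- The number of blocks of a partition of `β`, represented as a setoid. -/
def nBlocks {β : Type*} (s : Setoid β) : ℕ := Nat.card (Quotient s)

/-- Two partitions of a finite set are compatible if `|π| + |ρ| = n + |π ⊔ ρ|`. -/
def Compatible {β : Type*} (s t : Setoid β) : Prop :=
  nBlocks s + nBlocks t = Nat.card β + nBlocks (s ⊔ t)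

open scoped Classical in
/-- The forest compatibility matrix `F_β`. -/
def FMat (β : Type*) : Matrix (Setoid β) (Setoid β) ℚ := fun s t =>
  if Compatible s t then 1 else 0

/-- Two blocks `A` and `B` cross (with respect to a strict order `lt` on the
ground set) if there are `a1, a2 ∈ A` and `b1, b2 ∈ B` with
`a1 < b1 < a2 < b2` or `b1 < a1 < b2 < a2`. -/
def Crosses {α : Type*} (lt : α → α → Prop) (A B : Set α) : Prop :=
  ∃ a1 ∈ A, ∃ a2 ∈ A, ∃ b1 ∈ B, ∃ b2 ∈ B,
    (lt a1 b1 ∧ lt b1 a2 ∧ lt a2 b2) ∨ (lt b1 a1 ∧ lt a1 b2 ∧ lt b2 a2)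

/-- A partition (given as a setoid) is non-crossing for the order `lt` if no two
of its blocks (equivalence classes) cross. -/
def NonCrossingSetoid {α : Type*} (lt : α → α → Prop) (s : Setoid α) : Prop :=
  ∀ A ∈ s.classes, ∀ B ∈ s.classes, A ≠ B → ¬ Crosses lt A B

/-!
Let `V` be the span of the rows indexed by non-crossing partitions. Relabelling the ground set by a
permutation permutes the rows of `F`, and every partition becomes non-crossing after a suitable
relabelling (sort the ground set so that each block is an interval). So it suffices that `V` is
stable under relabelling by the transposition of two consecutive elements `x ⋖ y`.

Merging the blocks of `x` and `y` in `s` preserves compatibility with `t` exactly when they lie in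
different blocks of `s ⊔ t`. This gives a linear relation between rows that merge four blocks of a
partition: the sum over the three ways to merge them in two pairs equals the sum over the four ways
to merge three of them, minus the row merging all four. Detach `x` and `y` from their blocks in a
non-crossing partition and apply this relation to `x`, `y` and the two remainders. The swapped
partition is one term, and since `x` and `y` are consecutive all the others are non-crossing.
-/
section MergeBlocks

variable {α : Type*}

/-- The partition obtained from `s` by merging the block of `x` with the block of `y`. The relation
is spelled out, rather than generated by `s` and `(x, y)`, so that membership can be unfolded. -/
def mergeBlocks (s : Setoid α) (x y : α) : Setoid α where
  r u v := s u v ∨ (s u x ∧ s y v) ∨ (s u y ∧ s x v)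
  iseqv :=
    { refl := fun u => .inl (s.refl u)
      symm := by grind [s.comm']
      trans := by grind [s.comm', s.trans'] }

theorem mergeBlocks_apply {s : Setoid α} {x y u v : α} :
    mergeBlocks s x y u v ↔ s u v ∨ (s u x ∧ s y v) ∨ (s u y ∧ s x v) := Iff.rfl

theorem le_mergeBlocks (s : Setoid α) (x y : α) : s ≤ mergeBlocks s x y := fun _ _ => .inl

theorem mergeBlocks_rel (s : Setoid α) (x y : α) : mergeBlocks s x y x y :=
  .inr (.inl ⟨s.refl x, s.refl y⟩)

theorem mergeBlocks_le {s t : Setoid α} {x y : α} (hst : s ≤ t) (hxy : t x y) :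
    mergeBlocks s x y ≤ t := by
  rintro u v (huv | ⟨hux, hyv⟩ | ⟨huy, hxv⟩)
  · exact hst huv
  · exact t.trans (hst hux) (t.trans hxy (hst hyv))
  · exact t.trans (hst huy) (t.trans (t.symm hxy) (hst hxv))

theorem mergeBlocks_eq_self {s : Setoid α} {x y : α} (hxy : s x y) : mergeBlocks s x y = s :=
  le_antisymm (mergeBlocks_le le_rfl hxy) (le_mergeBlocks s x y)

theorem mergeBlocks_comm (s : Setoid α) (x y : α) : mergeBlocks s x y = mergeBlocks s y x :=
  Setoid.ext fun _ _ => or_congr_right or_comm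

theorem mergeBlocks_sup (s t : Setoid α) (x y : α) :
    mergeBlocks s x y ⊔ t = mergeBlocks (s ⊔ t) x y := by
  apply le_antisymm
  · exact sup_le
      (mergeBlocks_le (le_sup_left.trans (le_mergeBlocks _ x y)) (mergeBlocks_rel _ x y))
      (le_sup_right.trans (le_mergeBlocks _ x y))
  · exact mergeBlocks_le (sup_le_sup_right (le_mergeBlocks s x y) t)
      (Setoid.le_def.1 le_sup_left (mergeBlocks_rel s x y))

theorem mergeBlocks_induction [Finite α] {motive : Setoid α → Prop} (bot : motive ⊥)
    (merge : ∀ s x y, motive s → motive (mergeBlocks s x y)) (s : Setoid α) : motive s := by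
  have : Finite (Setoid α) := .of_injective _ fun _ _ => Setoid.eq_iff_rel_eq.2
  obtain ⟨r, ⟨hr, hrs⟩, hmax⟩ :=
    (Set.toFinite {r | motive r ∧ r ≤ s}).exists_maximal ⟨⊥, bot, bot_le⟩
  suffices s ≤ r from le_antisymm hrs this ▸ hr
  intro u v huv
  exact hmax ⟨merge r u v hr, mergeBlocks_le hrs huv⟩ (le_mergeBlocks r u v)
    (mergeBlocks_rel r u v)

end MergeBlocks

section BlockCount

variable {α : Type*}

theorem nBlocks_bot : nBlocks (⊥ : Setoid α) = Nat.card α :=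
  Nat.card_congr <| .symm <| .ofBijective (Quotient.mk ⊥)
    ⟨fun _ _ h => Quotient.exact h, Quotient.mk_surjective⟩

theorem nBlocks_mergeBlocks_add_one [Finite α] {s : Setoid α} {x y : α} (hxy : ¬ s x y) :
    nBlocks (mergeBlocks s x y) + 1 = nBlocks s := by
  let f : {q : Quotient s // q ≠ ⟦y⟧} → Quotient (mergeBlocks s x y) := fun q =>
    Quotient.map id (le_mergeBlocks s x y) q.1
  have hf : Function.Bijective f := by
    constructor
    · rintro ⟨⟨u⟩, hu⟩ ⟨⟨v⟩, hv⟩ huv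
      have hu' : ¬ s u y := fun h => hu (Quotient.sound h)
      have hv' : ¬ s v y := fun h => hv (Quotient.sound h)
      rcases (Quotient.exact huv : mergeBlocks s x y u v) with h | ⟨-, hyv⟩ | ⟨huy, -⟩
      · exact Subtype.ext (Quotient.sound h)
      · exact absurd (s.symm hyv) hv'
      · exact absurd huy hu'
    · rintro ⟨u⟩
      by_cases hu : s u y
      · exact ⟨⟨⟦x⟧, fun h => hxy (Quotient.exact h)⟩,
          Quotient.sound (.inr (.inl ⟨s.refl x, s.symm hu⟩))⟩
      · exact ⟨⟨⟦u⟧, fun h => hu (Quotient.exact h)⟩, rfl⟩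
  have hcard : Nat.card {q : Quotient s // q ≠ ⟦y⟧} + 1 = Nat.card (Quotient s) := by
    rw [add_comm, ← Set.ncard_singleton (⟦y⟧ : Quotient s)]
    exact Set.ncard_add_ncard_compl _
  rw [nBlocks, ← Nat.card_congr (.ofBijective f hf), hcard, nBlocks]

theorem nBlocks_add_nBlocks_le [Finite α] (s t : Setoid α) :
    nBlocks s + nBlocks t ≤ Nat.card α + nBlocks (s ⊔ t) := by
  induction s using mergeBlocks_induction with
  | bot => rw [nBlocks_bot, bot_sup_eq]
  | merge s x y ih =>
    rw [mergeBlocks_sup]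
    by_cases hs : s x y
    · rwa [mergeBlocks_eq_self hs, mergeBlocks_eq_self ((le_sup_left : s ≤ s ⊔ t) hs)]
    have hcount := nBlocks_mergeBlocks_add_one hs
    by_cases hst : (s ⊔ t) x y
    · rw [mergeBlocks_eq_self hst]
      lia
    · have hcount_sup := nBlocks_mergeBlocks_add_one hst
      lia

theorem compatible_mergeBlocks_iff [Finite α] {s : Setoid α} {x y : α} (hxy : ¬ s x y)
    (t : Setoid α) :
    Compatible (mergeBlocks s x y) t ↔ Compatible s t ∧ ¬ (s ⊔ t) x y := by
  have hcount := nBlocks_mergeBlocks_add_one hxy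
  have hle := nBlocks_add_nBlocks_le s t
  rw [Compatible, Compatible, mergeBlocks_sup]
  by_cases hst : (s ⊔ t) x y
  · rw [mergeBlocks_eq_self hst]
    simp only [hst, not_true, and_false, iff_false]
    lia
  · have hcount_sup := nBlocks_mergeBlocks_add_one hst
    simp only [hst, not_false_eq_true, and_true]
    lia

end BlockCount

section FourBlockRelation

variable {α : Type*} [Finite α] {s : Setoid α} {a b c d : α}

theorem compatible_mergeBlocks_three_iff (hab : ¬ s a b) (hac : ¬ s a c) (hbc : ¬ s b c)
    (t : Setoid α) :
    Compatible (mergeBlocks (mergeBlocks s a b) b c) t ↔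
      Compatible s t ∧ ¬ (s ⊔ t) a b ∧ ¬ (s ⊔ t) a c ∧ ¬ (s ⊔ t) b c := by
  have hbc' : ¬ mergeBlocks s a b b c := by
    simp only [mergeBlocks_apply]
    grind [s.comm']
  rw [compatible_mergeBlocks_iff hbc', compatible_mergeBlocks_iff hab, mergeBlocks_sup]
  simp only [mergeBlocks_apply]
  grind [(s ⊔ t).comm', (s ⊔ t).refl']

theorem compatible_mergeBlocks_two_pairs_iff (hab : ¬ s a b) (hcd : ¬ s c d)
    (hac : ¬ s a c) (hbc : ¬ s b c) (t : Setoid α) :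
    Compatible (mergeBlocks (mergeBlocks s a b) c d) t ↔
      Compatible s t ∧ ¬ (s ⊔ t) a b ∧ ¬ (s ⊔ t) c d ∧
        ¬ ((s ⊔ t) a c ∧ (s ⊔ t) b d) ∧ ¬ ((s ⊔ t) a d ∧ (s ⊔ t) b c) := by
  have hcd' : ¬ mergeBlocks s a b c d := by
    simp only [mergeBlocks_apply]
    grind [s.comm']
  rw [compatible_mergeBlocks_iff hcd', compatible_mergeBlocks_iff hab, mergeBlocks_sup]
  simp only [mergeBlocks_apply]
  grind [(s ⊔ t).comm']

theorem compatible_mergeBlocks_four_iff (hab : ¬ s a b) (hac : ¬ s a c) (had : ¬ s a d)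
    (hbc : ¬ s b c) (hbd : ¬ s b d) (hcd : ¬ s c d) (t : Setoid α) :
    Compatible (mergeBlocks (mergeBlocks (mergeBlocks s a b) b c) c d) t ↔
      Compatible s t ∧ ¬ (s ⊔ t) a b ∧ ¬ (s ⊔ t) a c ∧ ¬ (s ⊔ t) a d ∧
        ¬ (s ⊔ t) b c ∧ ¬ (s ⊔ t) b d ∧ ¬ (s ⊔ t) c d := by
  have hcd' : ¬ mergeBlocks (mergeBlocks s a b) b c c d := by
    simp only [mergeBlocks_apply]
    grind [s.comm']
  rw [compatible_mergeBlocks_iff hcd', compatible_mergeBlocks_three_iff hab hac hbc,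
    mergeBlocks_sup, mergeBlocks_sup]
  simp only [mergeBlocks_apply]
  grind [(s ⊔ t).comm', (s ⊔ t).refl']

theorem FMat_four_block_relation (hab : ¬ s a b) (hac : ¬ s a c) (had : ¬ s a d)
    (hbc : ¬ s b c) (hbd : ¬ s b d) (hcd : ¬ s c d) :
    FMat α (mergeBlocks (mergeBlocks s a b) c d) + FMat α (mergeBlocks (mergeBlocks s a c) b d) +
        FMat α (mergeBlocks (mergeBlocks s a d) b c) =
      FMat α (mergeBlocks (mergeBlocks s a b) b c) + FMat α (mergeBlocks (mergeBlocks s a b) b d) +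
        FMat α (mergeBlocks (mergeBlocks s a c) c d) +
        FMat α (mergeBlocks (mergeBlocks s b c) c d) -
        FMat α (mergeBlocks (mergeBlocks (mergeBlocks s a b) b c) c d) := by
  -- Both sides only see the partition that `s ⊔ t` induces on `{a, b, c, d}`, so this is a finite
  -- check on four points: the relation between rows of `F_4`.
  have hcb : ¬ s c b := fun h => hbc (s.symm h)
  have hdb : ¬ s d b := fun h => hbd (s.symm h)
  ext t
  have hpairs_ab_cd := compatible_mergeBlocks_two_pairs_iff hab hcd hac hbc t
  have hpairs_ac_bd := compatible_mergeBlocks_two_pairs_iff hac hbd hab hcb t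
  have hpairs_ad_bc := compatible_mergeBlocks_two_pairs_iff had hbc hab hdb t
  have hthree_abc := compatible_mergeBlocks_three_iff hab hac hbc t
  have hthree_abd := compatible_mergeBlocks_three_iff hab had hbd t
  have hthree_acd := compatible_mergeBlocks_three_iff hac had hcd t
  have hthree_bcd := compatible_mergeBlocks_three_iff hbc hbd hcd t
  have hfour := compatible_mergeBlocks_four_iff hab hac had hbc hbd hcd t
  simp only [Pi.add_apply, Pi.sub_apply, FMat, hpairs_ab_cd, hpairs_ac_bd, hpairs_ad_bc,
    hthree_abc, hthree_abd, hthree_acd, hthree_bcd, hfour]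
  grind [(s ⊔ t).comm', (s ⊔ t).trans']

end FourBlockRelation

section SplitOff

variable {α : Type*}

/-- The partition obtained from `s` by cutting every block `A` into `A ∩ S` and `A \ S`. -/
def splitOff (s : Setoid α) (S : Set α) : Setoid α := s ⊓ Setoid.ker (· ∈ S)

theorem splitOff_apply {s : Setoid α} {S : Set α} {u v : α} :
    splitOff s S u v ↔ s u v ∧ (u ∈ S ↔ v ∈ S) :=
  and_congr_right' eq_iff_iff

end SplitOff

section SwapRelation

open Function (update)

variable {α : Type*} [DecidableEq α] {s : Setoid α} {x y c d : α}

theorem comap_swap_eq_self (hxy : s x y) : Setoid.comap (Equiv.swap x y) s = s := by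
  have hswap (u : α) : s (Equiv.swap x y u) u := by
    rw [Equiv.swap_apply_def]
    split_ifs with hux huy
    · exact hux ▸ s.symm hxy
    · exact huy ▸ hxy
    · exact s.refl u
  ext u v
  exact ⟨fun h => s.trans (s.symm (hswap u)) (s.trans h (hswap v)),
    fun h => s.trans (hswap u) (s.trans h (s.symm (hswap v)))⟩

theorem comap_swap_eq_splitOff (hx : ∀ u, s x u → u = x) :
    Setoid.comap (Equiv.swap x y) s = splitOff (mergeBlocks s x y) {y} := by
  ext u v
  simp only [Setoid.comap_rel, Equiv.swap_apply_def, splitOff_apply, mergeBlocks_apply,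
    Set.mem_singleton_iff]
  grind [s.comm', s.refl']

theorem FMat_comap_swap [Finite α] (hxy : ¬ s x y) (hxc : s x c) (hcx : c ≠ x) (hyd : s y d)
    (hdy : d ≠ y) :
    FMat α (Setoid.comap (Equiv.swap x y) s) =
      FMat α (Setoid.comap (update id y x) s) + FMat α (Setoid.comap (update id x y) s) +
        FMat α (splitOff (mergeBlocks s x y) {y}) + FMat α (splitOff (mergeBlocks s x y) {x}) -
        FMat α (mergeBlocks s x y) - FMat α (splitOff (mergeBlocks s x y) {x, y}) - FMat α s := by
  -- Apply the four-block relation to the blocks of `x`, `y`, `c`, `d` in the partition obtained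
  -- from `s` by making `x` and `y` singletons.
  let base := splitOff (splitOff s {x}) {y}
  have hbase (u v : α) : base u v ↔ (s u v ∧ (u = x ↔ v = x)) ∧ (u = y ↔ v = y) := by
    simp only [base, splitOff_apply, Set.mem_singleton_iff]
  have hfour := FMat_four_block_relation (s := base) (a := x) (b := y) (c := c) (d := d)
    (by grind) (by grind) (by grind [s.comm', s.trans']) (by grind [s.trans', s.comm']) (by grind)
    (by grind [s.comm', s.trans'])
  have hxy_cd : mergeBlocks (mergeBlocks base x y) c d = splitOff (mergeBlocks s x y) {x, y} := by
    ext; simp only [mergeBlocks_apply, hbase, splitOff_apply, Set.mem_insert_iff,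
      Set.mem_singleton_iff]
    grind [s.comm', s.refl', s.trans']
  have hxc_yd : mergeBlocks (mergeBlocks base x c) y d = s := by
    ext; simp only [mergeBlocks_apply, hbase]
    grind [s.comm', s.refl', s.trans']
  have hxd_yc : mergeBlocks (mergeBlocks base x d) y c = Setoid.comap (Equiv.swap x y) s := by
    ext; simp only [mergeBlocks_apply, hbase, Setoid.comap_rel, Equiv.swap_apply_def]
    grind [s.comm', s.refl', s.trans']
  have hxyc : mergeBlocks (mergeBlocks base x y) y c = Setoid.comap (update id y x) s := by
    ext; simp only [mergeBlocks_apply, hbase, Setoid.comap_rel, Function.update_apply, id]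
    grind [s.comm', s.refl', s.trans']
  have hxyd : mergeBlocks (mergeBlocks base x y) y d = Setoid.comap (update id x y) s := by
    ext; simp only [mergeBlocks_apply, hbase, Setoid.comap_rel, Function.update_apply, id]
    grind [s.comm', s.refl', s.trans']
  have hxcd : mergeBlocks (mergeBlocks base x c) c d = splitOff (mergeBlocks s x y) {y} := by
    ext; simp only [mergeBlocks_apply, hbase, splitOff_apply, Set.mem_singleton_iff]
    grind (splits := 12) [s.comm', s.refl', s.trans']
  have hycd : mergeBlocks (mergeBlocks base y c) c d = splitOff (mergeBlocks s x y) {x} := by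
    ext; simp only [mergeBlocks_apply, hbase, splitOff_apply, Set.mem_singleton_iff]
    grind (splits := 12) [s.comm', s.refl', s.trans']
  have hxycd : mergeBlocks (mergeBlocks (mergeBlocks base x y) y c) c d = mergeBlocks s x y := by
    ext; simp only [mergeBlocks_apply, hbase]
    grind (splits := 12) [s.comm', s.refl', s.trans']
  rw [hxy_cd, hxc_yd, hxd_yc, hxycd, hxyc, hxyd, hxcd, hycd] at hfour
  linear_combination hfour

end SwapRelation

section NonCrossing

theorem nonCrossingSetoid_iff {α : Type*} {lt : α → α → Prop} {s : Setoid α} :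
    NonCrossingSetoid lt s ↔
      ∀ ⦃a b c d⦄, lt a b → lt b c → lt c d → s a c → s b d → s a b := by
  constructor
  · intro h a b c d hab hbc hcd hac hbd
    by_contra hnab
    refine h {u | s u a} (s.mem_classes a) {u | s u b} (s.mem_classes b) (fun heq => hnab ?_)
      ⟨a, s.refl a, c, s.symm hac, b, s.refl b, d, s.symm hbd, .inl ⟨hab, hbc, hcd⟩⟩
    exact (Set.ext_iff.1 heq a).1 (s.refl a)
  · rintro h _ ⟨p, rfl⟩ _ ⟨q, rfl⟩ hne ⟨a₁, ha₁, a₂, ha₂, b₁, hb₁, b₂, hb₂, hcross⟩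
    have ha : s a₁ a₂ := s.trans ha₁ (s.symm ha₂)
    have hb : s b₁ b₂ := s.trans hb₁ (s.symm hb₂)
    have hab : s a₁ b₁ := by
      rcases hcross with ⟨h₁, h₂, h₃⟩ | ⟨h₁, h₂, h₃⟩
      · exact h h₁ h₂ h₃ ha hb
      · exact s.symm (h h₁ h₂ h₃ hb ha)
    exact hne (s.eq_of_mem_classes ⟨p, rfl⟩ ha₁ ⟨q, rfl⟩ (s.trans hab hb₁))

namespace NonCrossingSetoid

variable {α β : Type*} [LinearOrder α] [LinearOrder β] {s : Setoid α} {x y : α}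

theorem comap_of_monotone (hs : NonCrossingSetoid (· < ·) s) {f : β → α} (hf : Monotone f) :
    NonCrossingSetoid (· < ·) (Setoid.comap f s) := by
  rw [nonCrossingSetoid_iff] at hs ⊢
  intro a b c d hab hbc hcd hac hbd
  rw [Setoid.comap_rel] at hac hbd ⊢
  rcases (hf hab.le).eq_or_lt with hab' | hab'
  · exact hab' ▸ s.refl (f a)
  rcases (hf hbc.le).eq_or_lt with hbc' | hbc'
  · exact hbc' ▸ hac
  rcases (hf hcd.le).eq_or_lt with hcd' | hcd'
  · exact s.trans hac (hcd' ▸ s.symm hbd)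
  exact hs hab' hbc' hcd' hac hbd

theorem ker_of_monotone {f : β → α} (hf : Monotone f) :
    NonCrossingSetoid (· < ·) (Setoid.ker f) := by
  have hbot : NonCrossingSetoid (· < ·) (⊥ : Setoid α) :=
    nonCrossingSetoid_iff.2 fun a b c d hab hbc _ hac _ =>
      absurd hac (hab.trans hbc).ne
  exact hbot.comap_of_monotone hf

theorem splitOff_of_ordConnected (hs : NonCrossingSetoid (· < ·) s) {S : Set α}
    (hS : S.OrdConnected) :
    NonCrossingSetoid (· < ·) (splitOff s S) := by
  rw [nonCrossingSetoid_iff] at hs ⊢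
  simp only [splitOff_apply]
  rintro a b c d hab hbc hcd ⟨hac, hSac⟩ ⟨hbd, hSbd⟩
  refine ⟨hs hab hbc hcd hac hbd, fun ha => ?_, fun hb => ?_⟩
  · exact hS.out ha (hSac.1 ha) ⟨hab.le, hbc.le⟩
  · exact hSac.2 (hS.out hb (hSbd.1 hb) ⟨hbc.le, hcd.le⟩)

theorem mem_Ioo_iff_of_rel (hs : NonCrossingSetoid (· < ·) s) {a b c d : α} (hbd : s b d)
    (hac : s a c) (hab : ¬ s a b) : a ∈ Set.Ioo b d ↔ c ∈ Set.Ioo b d := by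
  have mem_of_mem {u v : α} (huv : s u v) (hub : ¬ s u b) (hu : u ∈ Set.Ioo b d) :
      v ∈ Set.Ioo b d := by
    rw [nonCrossingSetoid_iff] at hs
    by_contra hv
    rcases lt_trichotomy v b with hvb | rfl | hbv
    · exact hub (s.trans huv (hs hvb hu.1 hu.2 (s.symm huv) hbd))
    · exact hub huv
    rcases (not_lt.1 fun hvd => hv ⟨hbv, hvd⟩).eq_or_lt with rfl | hdv
    · exact hub (s.trans huv (s.symm hbd))
    · exact hub (s.symm (hs hu.1 hu.2 hdv hbd huv))
  exact ⟨mem_of_mem hac hab, mem_of_mem (s.symm hac) fun hcb => hab (s.trans hac hcb)⟩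

theorem mem_Ioo_iff_of_mergeBlocks_rel (hs : NonCrossingSetoid (· < ·) s) (hxy : x ⋖ y)
    {a b c d : α} (hbd : s b d) (hac : mergeBlocks s x y a c) (hab : ¬ mergeBlocks s x y a b) :
    a ∈ Set.Ioo b d ↔ c ∈ Set.Ioo b d := by
  rw [mergeBlocks_apply] at hab
  rcases hac with hac | hac
  · exact hs.mem_Ioo_iff_of_rel hbd hac fun h => hab (.inl h)
  have hxb : ¬ s x b := by grind [s.comm', s.refl', s.trans']
  have hyb : ¬ s y b := by grind [s.comm', s.refl', s.trans']
  have hadjacent : x ∈ Set.Ioo b d ↔ y ∈ Set.Ioo b d := by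
    have hyd : y ≠ d := fun h => hyb (h ▸ s.symm hbd)
    have hxb' : x ≠ b := fun h => hxb (h ▸ s.refl b)
    exact ⟨fun hx => ⟨hx.1.trans hxy.lt, (hxy.ge_of_gt hx.2).lt_of_ne hyd⟩,
      fun hy => ⟨(hxy.le_of_lt hy.1).lt_of_ne' hxb', hxy.lt.trans hy.2⟩⟩
  rcases hac with ⟨hax, hyc⟩ | ⟨hay, hxc⟩
  · rw [← hs.mem_Ioo_iff_of_rel hbd hyc hyb, ← hadjacent,
      hs.mem_Ioo_iff_of_rel hbd (s.symm hax) hxb]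
  · rw [← hs.mem_Ioo_iff_of_rel hbd hxc hxb, hadjacent,
      hs.mem_Ioo_iff_of_rel hbd (s.symm hay) hyb]

theorem mergeBlocks_of_covBy (hs : NonCrossingSetoid (· < ·) s) (hxy : x ⋖ y) :
    NonCrossingSetoid (· < ·) (mergeBlocks s x y) := by
  rw [nonCrossingSetoid_iff]
  intro a b c d hab hbc hcd hac hbd
  by_contra hnot
  by_cases hbd' : s b d
  · exact lt_asymm hab ((hs.mem_Ioo_iff_of_mergeBlocks_rel hxy hbd' hac hnot).2 ⟨hbc, hcd⟩).1
  by_cases hac' : s a c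
  · have hnot' : ¬ mergeBlocks s x y b a := fun h => hnot (Setoid.symm' _ h)
    exact lt_asymm hcd ((hs.mem_Ioo_iff_of_mergeBlocks_rel hxy hac' hbd hnot').1 ⟨hab, hbc⟩).2
  rw [mergeBlocks_apply] at hac hbd hnot
  grind [s.comm', s.refl', s.trans']

end NonCrossingSetoid

end NonCrossing

section NonCrossingRowSpan

open Function (update)

variable {α : Type*} [LinearOrder α] {s : Setoid α} {x y : α}

theorem monotone_update_id_left (hxy : x ⋖ y) : Monotone (update id x y) := by
  intro u v huv
  simp only [Function.update_apply, id]
  grind [hxy.ge_of_gt, hxy.lt]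

theorem monotone_update_id_right (hxy : x ⋖ y) : Monotone (update id y x) := by
  intro u v huv
  simp only [Function.update_apply, id]
  grind [hxy.le_of_lt, hxy.lt]

/-- The span of the rows of the forest compatibility matrix indexed by the partitions that are
non-crossing for the given order. -/
def nonCrossingRowSpan (α : Type*) [LinearOrder α] : Submodule ℚ (Setoid α → ℚ) :=
  Submodule.span ℚ (FMat α '' {ρ | NonCrossingSetoid (· < ·) ρ})

theorem NonCrossingSetoid.FMat_mem_rowSpan (hs : NonCrossingSetoid (· < ·) s) :
    FMat α s ∈ nonCrossingRowSpan α :=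
  Submodule.subset_span ⟨s, hs, rfl⟩

theorem FMat_comap_swap_mem_nonCrossingRowSpan [Finite α] (hs : NonCrossingSetoid (· < ·) s)
    (hxy : x ⋖ y) : FMat α (Setoid.comap (Equiv.swap x y) s) ∈ nonCrossingRowSpan α := by
  have hmerge := hs.mergeBlocks_of_covBy hxy
  have hsplit_x := hmerge.splitOff_of_ordConnected (Set.ordConnected_singleton (a := x))
  have hsplit_y := hmerge.splitOff_of_ordConnected (Set.ordConnected_singleton (a := y))
  have hsplit_xy := hmerge.splitOff_of_ordConnected (hxy.Icc_eq ▸ Set.ordConnected_Icc)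
  by_cases hrel : s x y
  · rw [comap_swap_eq_self hrel]
    exact hs.FMat_mem_rowSpan
  by_cases hx : ∀ u, s x u → u = x
  · rw [comap_swap_eq_splitOff hx]
    exact hsplit_y.FMat_mem_rowSpan
  by_cases hy : ∀ u, s y u → u = y
  · rw [Equiv.swap_comm, comap_swap_eq_splitOff hy, mergeBlocks_comm]
    exact hsplit_x.FMat_mem_rowSpan
  push Not at hx hy
  obtain ⟨c, hxc, hcx⟩ := hx
  obtain ⟨d, hyd, hdy⟩ := hy
  have hleft := hs.comap_of_monotone (monotone_update_id_left hxy)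
  have hright := hs.comap_of_monotone (monotone_update_id_right hxy)
  rw [FMat_comap_swap hrel hxc hcx hyd hdy]
  refine sub_mem (sub_mem (sub_mem (add_mem (add_mem (add_mem ?_ ?_) ?_) ?_) ?_) ?_) ?_ <;>
    exact NonCrossingSetoid.FMat_mem_rowSpan ‹_›

end NonCrossingRowSpan

section Relabelling

variable {α β : Type*}

theorem nBlocks_comap_equiv (e : α ≃ β) (s : Setoid β) :
    nBlocks (Setoid.comap e s) = nBlocks s :=
  Nat.card_congr (Quotient.congr e fun _ _ => Iff.rfl)

theorem comap_equiv_le_iff (e : α ≃ β) {s : Setoid β} {t : Setoid α} :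
    Setoid.comap e s ≤ t ↔ s ≤ Setoid.comap e.symm t := by
  constructor
  · intro h u v huv
    exact h (by simpa only [Setoid.comap_rel, e.apply_symm_apply] using huv)
  · intro h u v huv
    simpa only [Setoid.comap_rel, e.symm_apply_apply] using h huv

theorem comap_equiv_sup (e : α ≃ β) (s t : Setoid β) :
    Setoid.comap e (s ⊔ t) = Setoid.comap e s ⊔ Setoid.comap e t :=
  eq_of_forall_ge_iff fun r => by simp only [comap_equiv_le_iff, sup_le_iff]

theorem compatible_comap_equiv_iff (e : α ≃ β) {s t : Setoid β} :
    Compatible (Setoid.comap e s) (Setoid.comap e t) ↔ Compatible s t := by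
  simp only [Compatible, ← comap_equiv_sup, nBlocks_comap_equiv, Nat.card_congr e]

theorem comap_equiv_comap_symm (e : α ≃ β) (t : Setoid α) :
    Setoid.comap e (Setoid.comap e.symm t) = t :=
  Setoid.ext fun u v => by simp only [Setoid.comap_rel, e.symm_apply_apply]

theorem FMat_comap_equiv (e : α ≃ β) (s : Setoid β) :
    FMat α (Setoid.comap e s) = LinearMap.funLeft ℚ ℚ (Setoid.comap e.symm) (FMat β s) := by
  ext t
  have hcompat : Compatible (Setoid.comap e s) t ↔ Compatible s (Setoid.comap e.symm t) := by
    rw [← compatible_comap_equiv_iff e, comap_equiv_comap_symm]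
  classical exact if_congr hcompat rfl rfl

end Relabelling

section Sorting

variable {α : Type*} [LinearOrder α] [Finite α]

theorem exists_perm_monotone_comp {β : Type*} [LinearOrder β] (f : α → β) :
    ∃ σ : Equiv.Perm α, Monotone (f ∘ σ) := by
  let _ := Fintype.ofFinite α
  let e := Fintype.orderIsoFinOfCardEq α rfl
  exact ⟨(e.symm.toEquiv.trans (Tuple.sort (f ∘ e))).trans e.toEquiv,
    (Tuple.monotone_sort (f ∘ e)).comp e.symm.monotone⟩

theorem exists_perm_nonCrossingSetoid_comap (π : Setoid α) :
    ∃ σ : Equiv.Perm α, NonCrossingSetoid (· < ·) (Setoid.comap σ π) := by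
  let rep (a : α) : α := (Quotient.mk π a).out
  have hker : Setoid.ker rep = π :=
    Setoid.ext fun _ _ => Quotient.out_inj.trans Quotient.eq
  obtain ⟨σ, hσ⟩ := exists_perm_monotone_comp rep
  have hcomap : Setoid.comap σ π = Setoid.ker (rep ∘ σ) := by
    nth_rewrite 1 [← hker]
    rfl
  exact ⟨σ, hcomap ▸ .ker_of_monotone hσ⟩

end Sorting

section AdjacentSwaps

variable {α : Type*} [LinearOrder α]

/-- The transpositions of consecutive elements of a linear order: the Coxeter generators of the
symmetric group when `α` is finite. -/
def adjacentSwaps (α : Type*) [LinearOrder α] : Set (Equiv.Perm α) :=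
  {σ | ∃ x y, x ⋖ y ∧ σ = Equiv.swap x y}

theorem mclosure_adjacentSwaps [Finite α] : Submonoid.closure (adjacentSwaps α) = ⊤ := by
  let _ := Fintype.ofFinite α
  let _ : LocallyFiniteOrder α := Fintype.toLocallyFiniteOrder
  have hcov {x y : α} (hxy : x ⋖ y) : Equiv.swap x y ∈ Submonoid.closure (adjacentSwaps α) :=
    Submonoid.subset_closure ⟨x, y, hxy, rfl⟩
  have hchain {x y : α} (hxy : Relation.TransGen (· ⋖ ·) x y) :
      Equiv.swap x y ∈ Submonoid.closure (adjacentSwaps α) := by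
    induction hxy with
    | single hxy => exact hcov hxy
    | tail _ hyz ih => exact SubmonoidClass.swap_mem_trans _ ih (hcov hyz)
  rw [eq_top_iff, ← Equiv.Perm.mclosure_isSwap, Submonoid.closure_le]
  rintro _ ⟨x, y, hne, rfl⟩
  rcases hne.lt_or_gt with hxy | hyx
  · exact hchain (lt_iff_transGen_covBy.1 hxy)
  · exact Equiv.swap_comm y x ▸ hchain (lt_iff_transGen_covBy.1 hyx)

theorem nonCrossingRowSpan_le_comap_funLeft [Finite α] (σ : Equiv.Perm α) :
    nonCrossingRowSpan α ≤
      (nonCrossingRowSpan α).comap (LinearMap.funLeft ℚ ℚ (Setoid.comap σ)) := by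
  have hσ : σ ∈ Submonoid.closure (adjacentSwaps α) :=
    mclosure_adjacentSwaps (α := α) ▸ Submonoid.mem_top σ
  induction hσ using Submonoid.closure_induction with
  | mem σ hσ =>
    obtain ⟨x, y, hxy, rfl⟩ := hσ
    rw [nonCrossingRowSpan, Submodule.span_le]
    rintro _ ⟨ρ, hρ, rfl⟩
    have hmem := FMat_comap_swap_mem_nonCrossingRowSpan hρ hxy
    rwa [FMat_comap_equiv, Equiv.symm_swap] at hmem
  | one => exact fun _ hv => hv
  | mul _ _ _ _ hσ hτ => exact fun _ hv => hσ (hτ hv)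

end AdjacentSwaps

theorem row_mem_span_noncrossing_general {α : Type*} [LinearOrder α] [Finite α] (π : Setoid α) :
    FMat α π ∈ Submodule.span ℚ (FMat α '' {ρ : Setoid α | NonCrossingSetoid (· < ·) ρ}) := by
  obtain ⟨σ, hσ⟩ := exists_perm_nonCrossingSetoid_comap π
  have hrow : FMat α π = LinearMap.funLeft ℚ ℚ (Setoid.comap σ) (FMat α (Setoid.comap σ π)) :=
    calc
      FMat α π = FMat α (Setoid.comap σ.symm (Setoid.comap σ π)) :=
        congrArg (FMat α) (comap_equiv_comap_symm σ.symm π).symm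
      _ = _ := FMat_comap_equiv σ.symm _
  exact hrow ▸ nonCrossingRowSpan_le_comap_funLeft σ hσ.FMat_mem_rowSpan

/-- Fix `0 < n` and a linear order `L` on `Fin n`. Every row of the forest
compatibility matrix `F_n` is a `ℚ`-linear combination of the rows indexed by
partitions of `Fin n` that are non-crossing with respect to `L`; that is, the
rows corresponding to non-crossing partitions span the row space of `F_n`. -/
theorem row_mem_span_noncrossing (n : ℕ) (hn : 0 < n) (L : LinearOrder (Fin n))
    (π : Setoid (Fin n)) :
    FMat (Fin n) π ∈ Submodule.span ℚ
      (FMat (Fin n) '' {ρ : Setoid (Fin n) | NonCrossingSetoid L.lt ρ}) := by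
  exact @row_mem_span_noncrossing_general (Fin n) L _ π
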